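/- Let t ≥ 1 and n ≥ 0 be integers and let q ∈ ℂ with 0 < |q| < 1. Define α''_0 = 1 and, for j ≥ 1, α''_j = (-1)^j ( q^{j(j+2t-3)/2} + q^{j(j-2t+3)/2} ) (all exponents are integers). Then the pair (α''_j, β''_n) is a Bailey pair relative to 1: Σ_{n ≥ n_{2t-1} ≥ n_{2t-2} ≥ … ≥ n_1 ≥ 0} (-1)^{n_t} q^{Σ_{i=1}^{t-1} n_{t+i}^2 + n_t(n_t-1)/2 - Σ_{i=1}^{t-1} n_i n_{i+1} - Σ_{i=1}^{t-2} n_i} / ( (q;q)_{n - n_{2t-1}} (q;q)_{n_{2t-1} - n_{2t-2}} ⋯ (q;q)_{n_2 - n_1} (q;q)_{n_1} ) = Σ_{j=0}^{n} α''_j / ( (q;q)_{n-j} (q;q)_{n+j} ), where the left-hand sum is over all weakly decreasing (2t-1)-tuples of nonnegative integers bounded above by n. -/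

import Mathlib

open Finset

/-- The finite q-Pochhammer symbol `(a;q)_n`. -/
noncomputable def qPoch (q a : ℂ) (n : ℕ) : ℂ := ∏ j ∈ Finset.range n, (1 - a * q ^ j)

/-- The summand of the left-hand multisum, for a weakly decreasing tuple
`n ≥ n_{2T-1} ≥ … ≥ n_1 ≥ 0` (the paper's `t` is `t+1`, the tuple has length
`2t+1`, and `A j = n_{j+1}` 0-based). -/
noncomputable def bTerm (q : ℂ) (t n : ℕ) (A : ℕ → ℕ) : ℂ :=
  (-1 : ℂ) ^ (A t) *
  q ^ ((∑ i ∈ Finset.range t, (A (t + 1 + i) : ℤ) ^ 2)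
      + (A t : ℤ) * ((A t : ℤ) - 1) / 2
      - (∑ i ∈ Finset.range t, (A i : ℤ) * (A (i + 1) : ℤ))
      - (∑ i ∈ Finset.range (t - 1), (A i : ℤ))) /
  (qPoch q q (n - A (2 * t)) *
    (∏ i ∈ Finset.range (2 * t), qPoch q q (A (i + 1) - A i)) *
    qPoch q q (A 0))

/-- `α''_j`: `α''_0 = 1`, and `α''_j = (-1)^j (q^{j(j+2T-3)/2} + q^{j(j-2T+3)/2})` for
`j ≥ 1`, with `T = t+1` the paper's `t` (so `2T-3 = 2t-1`); both exponents are
integers. -/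
noncomputable def alphaPP (q : ℂ) (t : ℕ) (j : ℕ) : ℂ :=
  if j = 0 then 1
  else (-1 : ℂ) ^ j *
    (q ^ ((j : ℤ) * ((j : ℤ) + 2 * (t : ℤ) - 1) / 2) +
     q ^ ((j : ℤ) * ((j : ℤ) - 2 * (t : ℤ) + 1) / 2))

/-!
Read the multisum from its innermost variable outwards, one summation at a time. Under `q ↦ q⁻¹`
the factor `1 / (q;q)_n` and each of the first layers, with weights `q ^ (-n_i n_{i+1} - n_i)`,
become a step of Bailey's lemma relative to `q⁻¹` in base `q⁻¹`, started at the unit Bailey pair.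
The last of these layers lacks the factor `q ^ (-n_i)`, so it is a Bailey step relative to `1`, and
the alternating layer in the middle undoes exactly this step: by orthogonality, its kernel inverts
the Bailey step. What remains is a Bailey pair relative to `q⁻¹` in base `q⁻¹`; lowering its
parameter to `1` and passing to the dual pair gives a Bailey pair relative to `1` in base `q`. The
outer layers, with weights `q ^ (n_i ^ 2)`, are steps of Bailey's lemma relative to `1`.
-/

section QPoch

variable {q a : ℂ}

lemma qPoch_zero (q a : ℂ) : qPoch q a 0 = 1 := prod_range_zero _

lemma qPoch_succ (q a : ℂ) (n : ℕ) : qPoch q a (n + 1) = qPoch q a n * (1 - a * q ^ n) :=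
  prod_range_succ _ n

lemma qPoch_self_succ (q : ℂ) (n : ℕ) :
    qPoch q q (n + 1) = qPoch q q n * (1 - q ^ (n + 1)) := by
  rw [qPoch_succ, pow_succ']

lemma qPoch_add (q a : ℂ) (m n : ℕ) :
    qPoch q a (m + n) = qPoch q a m * qPoch q (a * q ^ m) n := by
  simp only [qPoch, prod_range_add, pow_add, mul_assoc]

lemma qPoch_succ' (q a : ℂ) (n : ℕ) : qPoch q a (n + 1) = (1 - a) * qPoch q (a * q) n := by
  simpa [qPoch, add_comm 1 n] using qPoch_add q a 1 n

lemma qPoch_zero_left (q : ℂ) (n : ℕ) : qPoch q 0 n = 1 := by simp [qPoch]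

lemma one_sub_pow_ne_zero (hq : ∀ n, qPoch q q n ≠ 0) (n : ℕ) : 1 - q ^ (n + 1) ≠ 0 := by
  have h := hq (n + 1)
  rw [qPoch_self_succ] at h
  exact right_ne_zero_of_mul h

lemma qPoch_self_ne_zero (hq : ¬IsOfFinOrder q) (n : ℕ) : qPoch q q n ≠ 0 := by
  refine prod_ne_zero_iff.mpr fun j _ h => hq ?_
  refine isOfFinOrder_iff_pow_eq_one.mpr ⟨j + 1, j.succ_pos, ?_⟩
  rw [pow_succ', ← sub_eq_zero.mp h]

lemma choose_two_succ (n : ℕ) : (n + 1).choose 2 = n.choose 2 + n := by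
  rw [Nat.choose_succ_succ', Nat.choose_one_right, add_comm]

lemma two_mul_choose_two (n : ℕ) : 2 * (n.choose 2 : ℤ) = n * (n - 1) := by
  induction n with
  | zero => rfl
  | succ n ih => rw [choose_two_succ]; push_cast; linarith

lemma qPoch_eq_qPoch_inv (hq : q ≠ 0) (ha : a ≠ 0) (n : ℕ) :
    qPoch q a n = (-1) ^ n * a ^ n * q ^ n.choose 2 * qPoch q⁻¹ a⁻¹ n := by
  induction n with
  | zero => simp [qPoch_zero]
  | succ n ih =>
    rw [qPoch_succ, qPoch_succ, ih, choose_two_succ, inv_pow]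
    field_simp
    ring

lemma qPoch_inv_self_ne_zero (hq : ∀ n, qPoch q q n ≠ 0) (n : ℕ) : qPoch q⁻¹ q⁻¹ n ≠ 0 := by
  rcases eq_or_ne q 0 with rfl | h0
  · simpa using hq n
  · have h := hq n
    rw [qPoch_eq_qPoch_inv h0 h0] at h
    exact right_ne_zero_of_mul h

end QPoch

lemma sum_range_triangle_comm {M : Type*} [AddCommMonoid M] (f : ℕ → ℕ → M) (n : ℕ) :
    ∑ r ∈ range (n + 1), ∑ j ∈ range (r + 1), f r j =
      ∑ j ∈ range (n + 1), ∑ k ∈ range (n - j + 1), f (j + k) j := by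
  have h := sum_range_diag_flip (n + 1) fun j k => f (j + k) j
  calc _ = ∑ r ∈ range (n + 1), ∑ j ∈ range (r + 1), f (j + (r - j)) j :=
        sum_congr rfl fun r _ => sum_congr rfl fun j hj => by
          rw [Nat.add_sub_cancel' (mem_range_succ_iff.mp hj)]
    _ = _ := h.trans <| sum_congr rfl fun j hj => by
          rw [Nat.sub_add_comm (mem_range_succ_iff.mp hj)]

/-- `(α, β)` is a Bailey pair relative to `a` in base `q`. -/
def IsBaileyPair (q a : ℂ) (α β : ℕ → ℂ) : Prop :=
  ∀ n, β n = ∑ j ∈ range (n + 1), α j / (qPoch q q (n - j) * qPoch q (a * q) (n + j))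

/-- The action of Bailey's lemma (with both free parameters sent to infinity) on the
`β`-component of a Bailey pair relative to `a`. -/
noncomputable def baileyStep (q a : ℂ) (β : ℕ → ℂ) (n : ℕ) : ℂ :=
  ∑ r ∈ range (n + 1), a ^ r * q ^ r ^ 2 / qPoch q q (n - r) * β r

/-- The `α`-component of the unit Bailey pair relative to `a ≠ 1`, whose `β`-component is
`Pi.single 0 1`. -/
noncomputable def unitAlpha (q a : ℂ) (j : ℕ) : ℂ :=
  (-1) ^ j * q ^ j.choose 2 * ((1 - a * q ^ (2 * j)) / (1 - a)) * (qPoch q a j / qPoch q q j)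

section Bailey

variable {q a : ℂ} {α β : ℕ → ℂ}

lemma sum_one_sub_pow_mul_div_qPoch (hq : ∀ n, qPoch q q n ≠ 0) (c : ℕ → ℂ) (m : ℕ) :
    ∑ k ∈ range (m + 2), (1 - q ^ (m + 1 - k)) * (c k / qPoch q q (m + 1 - k)) =
      ∑ k ∈ range (m + 1), c k / qPoch q q (m - k) := by
  rw [sum_range_succ, Nat.sub_self, pow_zero, sub_self, zero_mul, add_zero]
  refine sum_congr rfl fun k hk => ?_
  have hmk := one_sub_pow_ne_zero hq (m - k)
  rw [Nat.sub_add_comm (mem_range_succ_iff.mp hk), qPoch_self_succ]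
  field_simp

theorem sum_qVandermonde (hq : ∀ n, qPoch q q n ≠ 0) (ha : ∀ n, qPoch q (a * q) n ≠ 0) (m : ℕ) :
    ∑ k ∈ range (m + 1), a ^ k * q ^ k ^ 2 / (qPoch q q k * qPoch q (a * q) k) / qPoch q q (m - k) =
      1 / (qPoch q q m * qPoch q (a * q) m) := by
  induction m generalizing a with
  | zero => simp [qPoch_zero]
  | succ m ih =>
    let term (k : ℕ) :=
      a ^ k * q ^ k ^ 2 / (qPoch q q k * qPoch q (a * q) k) / qPoch q q (m + 1 - k)
    have split_term (k : ℕ) (hk : k ∈ range (m + 2)) : (1 - q ^ (m + 1)) * term k =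
        (1 - q ^ (m + 1 - k)) * term k + q ^ (m + 1 - k) * (1 - q ^ k) * term k := by
      rw [← Nat.sub_add_cancel (mem_range_succ_iff.mp hk), pow_add, Nat.add_sub_cancel]
      ring
    have first : ∑ k ∈ range (m + 2), (1 - q ^ (m + 1 - k)) * term k =
        1 / (qPoch q q m * qPoch q (a * q) m) :=
      (sum_one_sub_pow_mul_div_qPoch hq _ m).trans (ih ha)
    have second : ∑ k ∈ range (m + 2), q ^ (m + 1 - k) * (1 - q ^ k) * term k =
        a * q ^ (m + 1) / (qPoch q q m * qPoch q (a * q) (m + 1)) := by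
      have ha' (n : ℕ) : 1 - a * q ≠ 0 ∧ qPoch q (a * q * q) n ≠ 0 := by
        simpa only [qPoch_succ', mul_ne_zero_iff] using ha (n + 1)
      rw [sum_range_succ', pow_zero, sub_self, mul_zero, zero_mul, add_zero, qPoch_succ' q (a * q),
        mul_left_comm, div_mul_eq_div_mul_one_div, ← ih fun n => (ha' n).2, mul_sum]
      refine sum_congr rfl fun k hk => ?_
      obtain ⟨d, rfl⟩ := Nat.exists_eq_add_of_le (mem_range_succ_iff.mp hk)
      have hk_succ := one_sub_pow_ne_zero hq k
      simp only [term, Nat.reduceSubDiff, Nat.add_sub_cancel_left, qPoch_self_succ,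
        qPoch_succ' q (a * q)]
      field_simp
      ring
    have hm := one_sub_pow_ne_zero hq m
    have hlast := ha (m + 1)
    rw [qPoch_succ] at hlast
    apply mul_left_cancel₀ hm
    rw [mul_sum, sum_congr rfl split_term, sum_add_distrib, first, second, qPoch_self_succ,
      qPoch_succ]
    field_simp [ha m, right_ne_zero_of_mul hlast]
    ring

theorem IsBaileyPair.step (hq : ∀ n, qPoch q q n ≠ 0) (ha : ∀ n, qPoch q (a * q) n ≠ 0)
    (h : IsBaileyPair q a α β) :
    IsBaileyPair q a (fun j => a ^ j * q ^ j ^ 2 * α j) (baileyStep q a β) := by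
  intro n
  simp only [baileyStep, h _, mul_sum]
  rw [sum_range_triangle_comm]
  refine sum_congr rfl fun j hj => ?_
  obtain ⟨d, rfl⟩ := Nat.exists_eq_add_of_le (mem_range_succ_iff.mp hj)
  have ha' (k : ℕ) : qPoch q (a * q ^ (2 * j) * q) k ≠ 0 := by
    have h := ha (2 * j + k)
    rw [qPoch_add, mul_right_comm] at h
    exact right_ne_zero_of_mul h
  have hsplit (k : ℕ) :
      qPoch q (a * q) (j + k + j) = qPoch q (a * q) (2 * j) * qPoch q (a * q ^ (2 * j) * q) k := by
    rw [mul_right_comm, ← qPoch_add]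
    congr 1
    ring
  rw [Nat.add_sub_cancel_left, hsplit]
  calc _ = a ^ j * q ^ j ^ 2 * α j / qPoch q (a * q) (2 * j) *
        ∑ k ∈ range (d + 1), (a * q ^ (2 * j)) ^ k * q ^ k ^ 2 /
          (qPoch q q k * qPoch q (a * q ^ (2 * j) * q) k) / qPoch q q (d - k) := by
        rw [mul_sum]
        refine sum_congr rfl fun k _ => ?_
        rw [Nat.add_sub_add_left, Nat.add_sub_cancel_left, hsplit]
        field_simp
        ring
    _ = _ := by rw [sum_qVandermonde hq ha']; field_simp

theorem IsBaileyPair.iterate (hq : ∀ n, qPoch q q n ≠ 0) (ha : ∀ n, qPoch q (a * q) n ≠ 0)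
    (h : IsBaileyPair q a α β) (k : ℕ) :
    IsBaileyPair q a (fun j => (a ^ j * q ^ j ^ 2) ^ k * α j) ((baileyStep q a)^[k] β) := by
  induction k with
  | zero => simpa using h
  | succ k ih =>
    simpa only [Function.iterate_succ_apply', pow_succ', mul_assoc] using ih.step hq ha

lemma unitAlpha_partial_sum (hq : ∀ n, qPoch q q n ≠ 0) (ha : ∀ n, qPoch q a n ≠ 0) (m d : ℕ) :
    (1 - q ^ (m + d)) * ∑ j ∈ range (m + 1),
        unitAlpha q a j / (qPoch q q (m + d - j) * qPoch q (a * q) (m + d + j)) =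
      (-1) ^ m * q ^ (m + 1).choose 2 * qPoch q (a * q) m * (1 - q ^ d) /
        (qPoch q q m * qPoch q q d * qPoch q (a * q) (2 * m + d)) := by
  have ha' (n : ℕ) : 1 - a ≠ 0 ∧ qPoch q (a * q) n ≠ 0 := by
    simpa only [qPoch_succ', mul_ne_zero_iff] using ha (n + 1)
  have h1a := (ha' 0).1
  induction m generalizing d with
  | zero => simp [unitAlpha, qPoch_zero, h1a, div_eq_mul_inv]
  | succ m ih =>
    have hm := one_sub_pow_ne_zero hq m
    have hd := one_sub_pow_ne_zero hq d
    have hz := (ha' (2 * m + d + 1 + 1)).2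
    have ham := (ha' m).2
    rw [sum_range_succ, mul_add, add_right_comm m 1 d, add_assoc m d 1, ih (d + 1), unitAlpha,
      choose_two_succ (m + 1), qPoch_succ' q a, qPoch_succ q (a * q) m,
      show m + (d + 1) - (m + 1) = d by omega,
      show m + (d + 1) + (m + 1) = 2 * m + d + 1 + 1 by ring,
      show 2 * (m + 1) + d = 2 * m + d + 1 + 1 by ring, ← add_assoc, qPoch_self_succ q d,
      qPoch_self_succ q m, qPoch_succ q (a * q) (2 * m + d + 1)]
    rw [qPoch_succ q (a * q) (2 * m + d + 1)] at hz
    obtain ⟨hz_init, hz_last⟩ := mul_ne_zero_iff.mp hz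
    field_simp
    ring

theorem isBaileyPair_unit (hq : ∀ n, qPoch q q n ≠ 0) (ha : ∀ n, qPoch q a n ≠ 0) :
    IsBaileyPair q a (unitAlpha q a) (Pi.single 0 1) := by
  intro n
  cases n with
  | zero =>
    have h1a : 1 - a ≠ 0 := by simpa [qPoch] using ha 1
    simp [unitAlpha, qPoch_zero, h1a]
  | succ n =>
    have h := unitAlpha_partial_sum hq ha (n + 1) 0
    simp only [add_zero, pow_zero, sub_self, mul_zero, zero_div, mul_eq_zero,
      one_sub_pow_ne_zero hq n, false_or] at h
    simp [h]

/-- If `α j = (1 - a q ^ (2 j + 1)) / (1 - a q) * γ j` belongs to a Bailey pair relative to `a q`,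
this is the `α`-component relative to `a` with the same `β`. -/
def lowerAlpha (q a : ℂ) (γ : ℕ → ℂ) : ℕ → ℂ
  | 0 => γ 0
  | j + 1 => γ (j + 1) - a * q ^ (2 * j + 1) * γ j

theorem IsBaileyPair.lower {γ : ℕ → ℂ} (hq : ∀ n, qPoch q q n ≠ 0)
    (ha : ∀ n, qPoch q (a * q) n ≠ 0)
    (h : IsBaileyPair q (a * q) (fun j => (1 - a * q ^ (2 * j + 1)) / (1 - a * q) * γ j) β) :
    IsBaileyPair q a (lowerAlpha q a γ) β := by
  intro n
  let u (j : ℕ) := γ j / (qPoch q q (n - j) * qPoch q (a * q) (n + j))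
  let v (j : ℕ) := a * q ^ (2 * j + 1) * γ j * (1 - q ^ (n - j)) /
    (qPoch q q (n - j) * qPoch q (a * q) (n + j + 1))
  have split_term (j : ℕ) (hj : j ∈ range (n + 1)) :
      (1 - a * q ^ (2 * j + 1)) / (1 - a * q) * γ j /
        (qPoch q q (n - j) * qPoch q (a * q * q) (n + j)) = u j - v j := by
    obtain ⟨d, rfl⟩ := Nat.exists_eq_add_of_le (mem_range_succ_iff.mp hj)
    have hlast := ha (j + d + j + 1)
    have hsucc := (qPoch_succ' q (a * q) (j + d + j)).symm.trans (qPoch_succ q (a * q) (j + d + j))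
    rw [qPoch_succ] at hlast
    have hlast' := right_ne_zero_of_mul hlast
    rw [div_mul_eq_mul_div, div_div, mul_left_comm, hsucc]
    simp only [u, v, Nat.add_sub_cancel_left, qPoch_succ]
    field_simp
    ring
  have lower_term (j : ℕ) (hj : j ∈ range n) :
      lowerAlpha q a γ (j + 1) / (qPoch q q (n - (j + 1)) * qPoch q (a * q) (n + (j + 1))) =
        u (j + 1) - v j := by
    obtain ⟨d, rfl⟩ := Nat.exists_eq_add_of_lt (mem_range.mp hj)
    have hd := one_sub_pow_ne_zero hq d
    simp only [u, v, lowerAlpha, show j + d + 1 - (j + 1) = d by omega,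
      show j + d + 1 - j = d + 1 by omega, qPoch_self_succ, ← add_assoc]
    field_simp
  have hv : v n = 0 := by simp [v]
  rw [h n, sum_congr rfl split_term, sum_sub_distrib, sum_range_succ' u, sum_range_succ v, hv,
    sum_range_succ', sum_congr rfl lower_term, sum_sub_distrib]
  simp only [lowerAlpha, u]
  ring

lemma qPoch_mul_qPoch_eq_inv (hq : q ≠ 0) (ha : a ≠ 0) (j d : ℕ) :
    qPoch q q d * qPoch q (a * q) (j + d + j) =
      a ^ (j + d) * q ^ ((j + d) ^ 2 + (j + d)) * (a ^ j * q ^ j ^ 2) *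
        (qPoch q⁻¹ q⁻¹ d * qPoch q⁻¹ (a⁻¹ * q⁻¹) (j + d + j)) := by
  have sign : (-1 : ℂ) ^ d * (-1) ^ (j + d + j) = 1 := by
    rw [← pow_add]
    exact Even.neg_one_pow ⟨j + d, by ring⟩
  have exponent : (j + d) ^ 2 + (j + d) + j ^ 2 =
      d + d.choose 2 + (j + d + j) + (j + d + j).choose 2 := by
    have h₁ := two_mul_choose_two d
    have h₂ := two_mul_choose_two (j + d + j)
    zify
    push_cast at h₂
    linarith
  have monomial : a ^ (j + d) * q ^ ((j + d) ^ 2 + (j + d)) * (a ^ j * q ^ j ^ 2) =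
      q ^ d * q ^ d.choose 2 * ((a * q) ^ (j + d + j) * q ^ (j + d + j).choose 2) := by
    calc _ = a ^ (j + d + j) * q ^ ((j + d) ^ 2 + (j + d) + j ^ 2) := by ring
      _ = _ := by rw [exponent]; ring
  rw [qPoch_eq_qPoch_inv hq hq, qPoch_eq_qPoch_inv hq (mul_ne_zero ha hq), mul_inv, monomial]
  linear_combination q ^ d * q ^ d.choose 2 * ((a * q) ^ (j + d + j) * q ^ (j + d + j).choose 2) *
    (qPoch q⁻¹ q⁻¹ d * qPoch q⁻¹ (a⁻¹ * q⁻¹) (j + d + j)) * sign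

theorem IsBaileyPair.dual (hq : q ≠ 0) (ha : a ≠ 0) (h : IsBaileyPair q a α β) :
    IsBaileyPair q⁻¹ a⁻¹ (fun j => α j / (a ^ j * q ^ j ^ 2))
      (fun n => a ^ n * q ^ (n ^ 2 + n) * β n) := by
  intro n
  simp only [h n, mul_sum]
  refine sum_congr rfl fun j hj => ?_
  obtain ⟨d, rfl⟩ := Nat.exists_eq_add_of_le (mem_range_succ_iff.mp hj)
  rw [Nat.add_sub_cancel_left, qPoch_mul_qPoch_eq_inv hq ha]
  field_simp

theorem sum_qPoch_orthogonality (hq : ∀ n, qPoch q q n ≠ 0) (n : ℕ) :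
    ∑ k ∈ range (n + 1), (-1) ^ k * q ^ k.choose 2 / (qPoch q q k * qPoch q q (n - k)) =
      if n = 0 then 1 else 0 := by
  have h := isBaileyPair_unit hq (a := 0) (by simp [qPoch_zero_left]) n
  simpa [unitAlpha, qPoch_zero_left, div_eq_mul_inv, Pi.single_apply, mul_assoc,
    mul_comm, mul_left_comm] using h.symm

theorem sum_mul_baileyStep (hq : ∀ n, qPoch q q n ≠ 0) (a : ℂ) (β : ℕ → ℂ) (n : ℕ) :
    ∑ r ∈ range (n + 1), (-1) ^ (n - r) * q ^ (n - r).choose 2 / qPoch q q (n - r) *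
      baileyStep q a β r = a ^ n * q ^ n ^ 2 * β n := by
  simp only [baileyStep, mul_sum]
  rw [sum_range_triangle_comm]
  have inner (j : ℕ) :
      ∑ k ∈ range (n - j + 1), (-1) ^ (n - (j + k)) * q ^ (n - (j + k)).choose 2 /
        qPoch q q (n - (j + k)) * (a ^ j * q ^ j ^ 2 / qPoch q q (j + k - j) * β j) =
      a ^ j * q ^ j ^ 2 * β j * if n - j = 0 then 1 else 0 := by
    rw [← sum_qPoch_orthogonality hq, ← sum_flip, mul_sum]
    refine sum_congr rfl fun k hk => ?_
    rw [Nat.add_sub_cancel_left, Nat.sub_add_eq, Nat.sub_sub_self (mem_range_succ_iff.mp hk)]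
    ring
  rw [sum_congr rfl fun j _ => inner j, sum_range_succ, sum_eq_zero]
  · simp
  · intro j hj
    rw [if_neg (Nat.sub_ne_zero_of_lt (mem_range.mp hj)), mul_zero]

end Bailey

section ChainSum

variable {R : Type*} [CommSemiring R]

/-- The `m`-fold sum of `K (m-1) n r_{m-1} * K (m-2) r_{m-1} r_{m-2} * ⋯ * K 0 r_1 r_0 * f r_0`
over `n ≥ r_{m-1} ≥ ⋯ ≥ r_0 ≥ 0`. -/
def chainSum (K : ℕ → ℕ → ℕ → R) (f : ℕ → R) : ℕ → ℕ → R
  | 0, n => f n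
  | m + 1, n => ∑ r ∈ range (n + 1), K m n r * chainSum K f m r

theorem sum_prod_snoc_eq_of_recurrence {ι : Type*} [Fintype ι] {K : ℕ → ι → ι → R}
    {F : ℕ → ι → R} (hF : ∀ m x, F (m + 1) x = ∑ y, K m x y * F m y) (m : ℕ) (x : ι) :
    ∑ a : Fin m → ι,
      (∏ i : Fin m, K i (Fin.snoc (α := fun _ => ι) a x i.succ)
        (Fin.snoc (α := fun _ => ι) a x i.castSucc)) * F 0 (Fin.snoc (α := fun _ => ι) a x 0) =
      F m x := by
  induction m generalizing x with
  | zero => simp [Fin.snoc]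
  | succ m ih =>
    rw [← (Fin.snocEquiv fun _ => ι).sum_comp, Fintype.sum_prod_type, hF]
    refine sum_congr rfl fun y _ => ?_
    rw [← ih y, mul_sum]
    refine sum_congr rfl fun a _ => ?_
    simp only [Fin.snocEquiv_apply, Fin.prod_univ_castSucc, Fin.succ_castSucc, Fin.snoc_castSucc,
      Fin.succ_last, Fin.snoc_last, Fin.val_castSucc, Fin.val_last, ← Fin.castSucc_zero]
    ring

theorem sum_monotone_eq_chainSum (K : ℕ → ℕ → ℕ → R) (f : ℕ → R) (m n : ℕ) :
    ∑ a : Fin (m + 1) → Fin (n + 1) with ∀ i : Fin m, a i.castSucc ≤ a i.succ,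
      (∏ i : Fin m, K i (a i.succ) (a i.castSucc)) * K m n (a (Fin.last m)) * f (a 0) =
      chainSum K f (m + 1) n := by
  have recurrence (k : ℕ) (x : Fin (n + 1)) : chainSum K f (k + 1) x =
      ∑ y : Fin (n + 1), (if y ≤ x then K k x y else 0) * chainSum K f k y := by
    have h := Fin.sum_univ_eq_sum_range
      (fun r => if r ≤ (x : ℕ) then K k x r * chainSum K f k r else 0) (n + 1)
    simp only [ite_mul, zero_mul, Fin.le_iff_val_le_val, h, ← sum_filter]
    refine sum_congr ?_ fun _ _ => rfl
    ext r
    simp only [mem_filter, mem_range]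
    omega
  have h := sum_prod_snoc_eq_of_recurrence (F := fun k (x : Fin (n + 1)) => chainSum K f k x)
    recurrence (m + 1) (Fin.last n)
  rw [Fin.val_last] at h
  rw [← h, sum_filter]
  refine sum_congr rfl fun a _ => ?_
  have snoc_zero : Fin.snoc (α := fun _ => Fin (n + 1)) a (Fin.last n) 0 = a 0 :=
    Fin.snoc_castSucc (α := fun _ => Fin (n + 1)) (Fin.last n) a 0
  rw [snoc_zero, Fin.prod_univ_castSucc]
  simp only [Fin.succ_castSucc, Fin.snoc_castSucc, Fin.succ_last, Fin.snoc_last, Fin.le_last,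
    if_true, Fin.val_castSucc, Fin.val_last, Fintype.prod_ite_zero, ite_mul, zero_mul, chainSum]

end ChainSum

section Multisum

/-- The factor of the numerator of `bTerm q t` carried by the entry `r = n_{i+1}` of the tuple,
whose next entry is `N = n_{i+2}`. -/
noncomputable def chainWeight (q : ℂ) (t i N r : ℕ) : ℂ :=
  if i < t then (if i + 1 < t then q⁻¹ else 1) ^ r * q⁻¹ ^ (r * N)
  else if i = t then (-1) ^ r * q ^ r.choose 2
  else q ^ r ^ 2

/-- The kernel whose iterated sum is the multisum of `bTerm q t`. -/
noncomputable def chainKernel (q : ℂ) (t i N r : ℕ) : ℂ :=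
  chainWeight q t i N r / qPoch q q (N - r)

variable {q : ℂ}

lemma prod_chainWeight (hq : q ≠ 0) (t : ℕ) (A : ℕ → ℕ) :
    ∏ i ∈ range (2 * t + 1), chainWeight q t i (A (i + 1)) (A i) =
      (-1) ^ A t * q ^ ((∑ i ∈ range t, (A (t + 1 + i) : ℤ) ^ 2) + (A t : ℤ) * ((A t : ℤ) - 1) / 2
        - (∑ i ∈ range t, (A i : ℤ) * (A (i + 1) : ℤ)) - ∑ i ∈ range (t - 1), (A i : ℤ)) := by
  have low : ∏ i ∈ range t, chainWeight q t i (A (i + 1)) (A i) =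
      (q ^ ∑ i ∈ range t, A i * A (i + 1))⁻¹ * (q ^ ∑ i ∈ range (t - 1), A i)⁻¹ := by
    have linear : ∏ i ∈ range t, (if i + 1 < t then q⁻¹ else 1) ^ A i =
        ∏ i ∈ range (t - 1), q⁻¹ ^ A i := by
      cases t with
      | zero => rfl
      | succ t =>
        rw [prod_range_succ, if_neg (lt_irrefl _), one_pow, mul_one]
        refine prod_congr rfl fun i hi => ?_
        rw [if_pos (Nat.succ_lt_succ (by simpa using hi))]
    have unfold_weight : ∀ i ∈ range t, chainWeight q t i (A (i + 1)) (A i) =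
        (if i + 1 < t then q⁻¹ else 1) ^ A i * q⁻¹ ^ (A i * A (i + 1)) :=
      fun i hi => if_pos (mem_range.mp hi)
    rw [prod_congr rfl unfold_weight, prod_mul_distrib, linear, prod_pow_eq_pow_sum,
      prod_pow_eq_pow_sum, inv_pow, inv_pow, mul_comm]
  have mid : chainWeight q t t (A (t + 1)) (A t) = (-1) ^ A t * q ^ (A t).choose 2 := by
    simp [chainWeight]
  have high : ∏ i ∈ range t, chainWeight q t (t + 1 + i) (A (t + 1 + i + 1)) (A (t + 1 + i)) =
      q ^ ∑ i ∈ range t, A (t + 1 + i) ^ 2 := by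
    rw [← prod_pow_eq_pow_sum]
    refine prod_congr rfl fun i _ => ?_
    rw [chainWeight, if_neg (by omega), if_neg (by omega)]
  have choose_two : (A t : ℤ) * ((A t : ℤ) - 1) / 2 = ((A t).choose 2 : ℕ) := by
    rw [← two_mul_choose_two, Int.mul_ediv_cancel_left _ two_ne_zero]
  rw [show 2 * t + 1 = t + 1 + t by ring, prod_range_add, prod_range_succ, low, mid, high,
    choose_two, zpow_sub₀ hq, zpow_sub₀ hq, zpow_add₀ hq]
  simp only [← zpow_natCast]
  push_cast
  ring

lemma bTerm_eq_prod_chainKernel (hq : q ≠ 0) (t n : ℕ) (A : ℕ → ℕ) :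
    bTerm q t n A = (∏ i ∈ range (2 * t), chainKernel q t i (A (i + 1)) (A i)) *
      chainKernel q t (2 * t) n (A (2 * t)) * (1 / qPoch q q (A 0)) := by
  have last_weight : chainWeight q t (2 * t) n (A (2 * t)) =
      chainWeight q t (2 * t) (A (2 * t + 1)) (A (2 * t)) := by
    simp [chainWeight, show ¬2 * t < t by omega]
  rw [bTerm, ← prod_chainWeight hq, prod_range_succ]
  simp only [chainKernel, prod_div_distrib, last_weight]
  ring

theorem sum_bTerm_eq_chainSum (hq : q ≠ 0) (t n : ℕ) :
    ∑ a : Fin (2 * t + 1) → Fin (n + 1) with ∀ i : Fin (2 * t), a i.castSucc ≤ a i.succ,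
      bTerm q t n (fun j => if h : j < 2 * t + 1 then (a ⟨j, h⟩ : ℕ) else 0) =
      chainSum (chainKernel q t) (fun n => 1 / qPoch q q n) (2 * t + 1) n := by
  rw [← sum_monotone_eq_chainSum]
  refine sum_congr rfl fun a _ => ?_
  rw [bTerm_eq_prod_chainKernel hq, prod_range]
  have term (j : ℕ) (hj : j < 2 * t + 1) :
      (if h : j < 2 * t + 1 then (a ⟨j, h⟩ : ℕ) else 0) = a ⟨j, hj⟩ := dif_pos hj
  rw [term 0 (by omega), term (2 * t) (by omega)]
  congr 2
  refine prod_congr rfl fun i _ => ?_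
  rw [term i (by omega), term (i + 1) (by omega)]
  rfl

end Multisum

section Evaluation

variable {q : ℂ}

lemma one_div_qPoch_self_eq_inv (hq : q ≠ 0) (n : ℕ) :
    1 / qPoch q q n = (-1) ^ n * q⁻¹ ^ (n + 1).choose 2 / qPoch q⁻¹ q⁻¹ n := by
  rw [qPoch_eq_qPoch_inv hq hq, choose_two_succ, inv_pow, pow_add]
  rcases neg_one_pow_eq_or ℂ n with h | h <;> rw [h] <;> field_simp

lemma sum_eq_baileyStep_inv (hq : q ≠ 0) (a : ℂ) (β : ℕ → ℂ) (n : ℕ) :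
    ∑ r ∈ range (n + 1), a ^ r * q⁻¹ ^ (r * n) / qPoch q q (n - r) *
        ((-1) ^ r * q⁻¹ ^ (r + 1).choose 2 * β r) =
      (-1) ^ n * q⁻¹ ^ (n + 1).choose 2 * baileyStep q⁻¹ a β n := by
  rw [baileyStep, mul_sum]
  refine sum_congr rfl fun r hr => ?_
  obtain ⟨d, rfl⟩ := Nat.exists_eq_add_of_le (mem_range_succ_iff.mp hr)
  have exponent : r * (r + d) + (d + 1).choose 2 + (r + 1).choose 2 =
      (r + d + 1).choose 2 + r ^ 2 := by
    have h₁ := two_mul_choose_two (d + 1)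
    have h₂ := two_mul_choose_two (r + 1)
    have h₃ := two_mul_choose_two (r + d + 1)
    zify
    push_cast at *
    linarith
  have monomial : q⁻¹ ^ (r * (r + d)) * q⁻¹ ^ (d + 1).choose 2 * q⁻¹ ^ (r + 1).choose 2 =
      q⁻¹ ^ (r + d + 1).choose 2 * q⁻¹ ^ r ^ 2 := by
    simp only [← pow_add, exponent]
  rw [Nat.add_sub_cancel_left, div_eq_mul_one_div, one_div_qPoch_self_eq_inv hq]
  linear_combination (a ^ r * (-1) ^ (r + d) * β r / qPoch q⁻¹ q⁻¹ d) * monomial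

/-- The `β`-component obtained from the unit Bailey pair relative to `q⁻¹` in base `q⁻¹` by `k`
applications of Bailey's lemma. -/
noncomputable def invBeta (q : ℂ) (k : ℕ) : ℕ → ℂ :=
  (baileyStep q⁻¹ q⁻¹)^[k] (Pi.single 0 1)

lemma chainSum_of_le (hq : q ≠ 0) {t i : ℕ} (hi : i ≤ t) (n : ℕ) :
    chainSum (chainKernel q t) (fun n => 1 / qPoch q q n) i n =
      (-1) ^ n * q⁻¹ ^ (n + 1).choose 2 *
        baileyStep q⁻¹ (if i < t then q⁻¹ else 1) (invBeta q i) n := by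
  induction i generalizing n with
  | zero =>
    simp [chainSum, one_div_qPoch_self_eq_inv hq, baileyStep, invBeta, sum_range_succ',
      div_eq_mul_inv]
  | succ i ih =>
    have hit : i < t := hi
    rw [chainSum, ← sum_eq_baileyStep_inv hq]
    refine sum_congr rfl fun r _ => ?_
    rw [ih hit.le, chainKernel, chainWeight, if_pos hit, if_pos hit, invBeta, invBeta,
      Function.iterate_succ_apply']

lemma chainSum_succ (hq0 : q ≠ 0) (hq : ∀ n, qPoch q q n ≠ 0) (t n : ℕ) :
    chainSum (chainKernel q t) (fun n => 1 / qPoch q q n) (t + 1) n =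
      q⁻¹ ^ (n ^ 2 + n) * invBeta q t n := by
  have hinv := sum_mul_baileyStep (qPoch_inv_self_ne_zero hq) 1 (invBeta q t) n
  rw [one_pow, one_mul] at hinv
  have combine (r d : ℕ) : (-1) ^ r * q ^ r.choose 2 * (-1) ^ r * q⁻¹ ^ (r + 1).choose 2 *
      q⁻¹ ^ (d + 1).choose 2 = q⁻¹ ^ (r + d) * q⁻¹ ^ d.choose 2 := by
    rw [choose_two_succ, choose_two_succ, inv_pow, inv_pow, inv_pow, inv_pow]
    rcases neg_one_pow_eq_or ℂ r with h | h <;> rw [h] <;> field_simp <;> ring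
  rw [chainSum, add_comm (n ^ 2), pow_add, mul_assoc, ← hinv, mul_sum]
  refine sum_congr rfl fun r hr => ?_
  obtain ⟨d, rfl⟩ := Nat.exists_eq_add_of_le (mem_range_succ_iff.mp hr)
  rw [chainSum_of_le hq0 le_rfl, if_neg (lt_irrefl t), chainKernel, chainWeight,
    if_neg (lt_irrefl t), if_pos rfl, Nat.add_sub_cancel_left, div_eq_mul_one_div,
    one_div_qPoch_self_eq_inv hq0]
  linear_combination (-1) ^ d / qPoch q⁻¹ q⁻¹ d * baileyStep q⁻¹ 1 (invBeta q t) r * combine r d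

lemma chainSum_add_succ (hq0 : q ≠ 0) (hq : ∀ n, qPoch q q n ≠ 0) (t s : ℕ) :
    chainSum (chainKernel q t) (fun n => 1 / qPoch q q n) (t + 1 + s) =
      (baileyStep q 1)^[s] (fun n => q⁻¹ ^ (n ^ 2 + n) * invBeta q t n) := by
  induction s with
  | zero => exact funext (chainSum_succ hq0 hq t)
  | succ s ih =>
    rw [Function.iterate_succ_apply', ← ih]
    funext n
    rw [← add_assoc, chainSum, baileyStep]
    refine sum_congr rfl fun r _ => ?_
    rw [chainKernel, chainWeight, if_neg (by omega), if_neg (by omega), one_pow,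
      one_mul]

/-- The `α`-component attached to `invBeta q t` relative to `q⁻¹`, up to the factor
`(1 - q⁻¹ ^ (2 * j + 1)) / (1 - q⁻¹)`. -/
noncomputable def invGamma (q : ℂ) (t j : ℕ) : ℂ :=
  (-1) ^ j * q⁻¹ ^ (t * (j ^ 2 + j) + j.choose 2)

lemma isBaileyPair_invBeta (hq : ∀ n, qPoch q q n ≠ 0) (t : ℕ) :
    IsBaileyPair q⁻¹ 1 (lowerAlpha q⁻¹ 1 (invGamma q t)) (invBeta q t) := by
  have hp := qPoch_inv_self_ne_zero hq
  have hp' (n : ℕ) : qPoch q⁻¹ (q⁻¹ * q⁻¹) n ≠ 0 := by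
    have h := hp (n + 1)
    rw [qPoch_succ'] at h
    exact right_ne_zero_of_mul h
  refine IsBaileyPair.lower hp (by simpa using hp) ?_
  rw [one_mul]
  have h := (isBaileyPair_unit hp hp).iterate hp hp' t
  rw [← invBeta] at h
  convert h using 2 with j
  rw [unitAlpha, invGamma, div_self (hp j)]
  ring

lemma alphaPP_eq_lowerAlpha (hq : q ≠ 0) (t j : ℕ) :
    alphaPP q t j = (q ^ j ^ 2) ^ t * (lowerAlpha q⁻¹ 1 (invGamma q t) j / q⁻¹ ^ j ^ 2) := by
  cases j with
  | zero => simp [alphaPP, lowerAlpha, invGamma]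
  | succ j =>
    have choose_succ := two_mul_choose_two (j + 1)
    have choose_self := two_mul_choose_two j
    have half {m k : ℤ} (hmk : m = 2 * k) : m / 2 = k := by
      rw [hmk, Int.mul_ediv_cancel_left _ two_ne_zero]
    rw [alphaPP, if_neg j.succ_ne_zero, lowerAlpha, invGamma, invGamma]
    have plus : ((j + 1 : ℕ) : ℤ) * ((j + 1 : ℕ) + 2 * t - 1) / 2 = ((t + 1) * (j + 1) ^ 2 : ℕ) -
      (t * (j ^ 2 + j) + j.choose 2 : ℕ) - (2 * j + 1 : ℕ) := half (by push_cast; linarith)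
    have minus : ((j + 1 : ℕ) : ℤ) * ((j + 1 : ℕ) - 2 * t + 1) / 2 =
      ((t + 1) * (j + 1) ^ 2 : ℕ) - (t * ((j + 1) ^ 2 + (j + 1)) + (j + 1).choose 2 : ℕ) :=
      half (by push_cast at *; linarith)
    rw [plus, minus, zpow_sub₀ hq, zpow_sub₀ hq, zpow_sub₀ hq, add_mul t 1, one_mul, mul_comm t]
    simp only [zpow_natCast, inv_pow, pow_add q (_ * t), pow_mul q _ t, div_eq_mul_inv, inv_inv]
    ring

theorem isBaileyPair_alphaPP (hq0 : q ≠ 0) (hq : ∀ n, qPoch q q n ≠ 0) (t : ℕ) :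
    IsBaileyPair q 1 (alphaPP q t)
      ((baileyStep q 1)^[t] fun n => q⁻¹ ^ (n ^ 2 + n) * invBeta q t n) := by
  have h := (isBaileyPair_invBeta hq t).dual (inv_ne_zero hq0) one_ne_zero
  simp only [inv_inv, inv_one, one_pow, one_mul] at h
  convert h.iterate hq (by simpa using hq) t using 2 with j
  simpa using alphaPP_eq_lowerAlpha hq0 t j

end Evaluation

theorem stmt18_general (t n : ℕ) (q : ℂ) (hq0 : q ≠ 0) (hq : ¬IsOfFinOrder q) :
    ∑ a ∈ Finset.univ.filter
        (fun a : Fin (2 * t + 1) → Fin (n + 1) =>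
          ∀ i : Fin (2 * t), a i.castSucc ≤ a i.succ),
      bTerm q t n (fun j => if h : j < 2 * t + 1 then (a ⟨j, h⟩ : ℕ) else 0) =
    ∑ j ∈ Finset.range (n + 1),
      alphaPP q t j / (qPoch q q (n - j) * qPoch q q (n + j)) := by
  have hq' := qPoch_self_ne_zero hq
  rw [sum_bTerm_eq_chainSum hq0, show 2 * t + 1 = t + 1 + t by ring, chainSum_add_succ hq0 hq',
    isBaileyPair_alphaPP hq0 hq' t n, one_mul]

/-- `(α''_j, β''_n)` is a Bailey pair relative to `1`:
the multisum `β''_n` equals `Σ_{j=0}^{n} α''_j/((q;q)_{n-j}(q;q)_{n+j})`.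
The paper's `t` is `t+1` here. -/
theorem stmt18 (t n : ℕ) (q : ℂ)
    (hq0 : 0 < ‖q‖) (hq1 : ‖q‖ < 1) :
    ∑ a ∈ Finset.univ.filter
        (fun a : Fin (2 * t + 1) → Fin (n + 1) =>
          ∀ i : Fin (2 * t), a i.castSucc ≤ a i.succ),
      bTerm q t n (fun j => if h : j < 2 * t + 1 then (a ⟨j, h⟩ : ℕ) else 0) =
    ∑ j ∈ Finset.range (n + 1),
      alphaPP q t j / (qPoch q q (n - j) * qPoch q q (n + j)) :=
  stmt18_general t n q (norm_pos_iff.mp hq0) fun h => hq1.ne h.norm_eq_one
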